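/- Let G be a finite minimal nonsupersoluble group. Then G^𝔘/Φ(G^𝔘) is a noncyclic chief factor of G, where Φ denotes the Frattini subgroup. -/

import Mathlib

open Subgroup

/-- A finite group is supersoluble if it has a normal series, all of whose terms are
normal in the whole group, with cyclic factors. -/
def IsSupersoluble (G : Type*) [Group G] : Prop :=
  ∃ (n : ℕ) (c : Fin (n + 1) → Subgroup G) (hc : ∀ i, (c i).Normal),
    c 0 = ⊥ ∧ c (Fin.last n) = ⊤ ∧
    ∀ i : Fin n, c i.castSucc ≤ c i.succ ∧
      haveI := (hc i.castSucc).subgroupOf (c i.succ)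
      IsCyclic (↥(c i.succ) ⧸ ((c i.castSucc).subgroupOf (c i.succ)))

/-- `H` is a maximal subgroup of `K`, where `H ≤ K` are subgroups of a common group. -/
def IsMaximalIn {G : Type*} [Group G] (H K : Subgroup G) : Prop :=
  H ≤ K ∧ IsCoatom (H.subgroupOf K)

/-- The `n`-maximal subgroups of `G`: `0`-maximal is `G` itself, and an `(n+1)`-maximal
subgroup is a maximal subgroup of some `n`-maximal subgroup. -/
def IsNMaximal {G : Type*} [Group G] : ℕ → Subgroup G → Prop
  | 0, H => H = ⊤
  | n + 1, H => ∃ K : Subgroup G, IsNMaximal n K ∧ IsMaximalIn H K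

/-- `H` is `K`-`𝔘`-subnormal in `K`: there is a chain of subgroups
`H = H₀ ≤ H₁ ≤ ⋯ ≤ Hₜ = K` such that at each step either `H_{i-1}` is normal in `H_i`
or `H_i` modulo the core of `H_{i-1}` in `H_i` is supersoluble. -/
def IsKUSubnormalIn {G : Type*} [Group G] (H K : Subgroup G) : Prop :=
  ∃ (n : ℕ) (c : Fin (n + 1) → Subgroup G),
    c 0 = H ∧ c (Fin.last n) = K ∧
    ∀ i : Fin n, c i.castSucc ≤ c i.succ ∧
      (((c i.castSucc).subgroupOf (c i.succ)).Normal ∨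
        IsSupersoluble (↥(c i.succ) ⧸ ((c i.castSucc).subgroupOf (c i.succ)).normalCore))

/-- `H` is `K`-`𝔘`-subnormal in `G`. -/
def IsKUSubnormal {G : Type*} [Group G] (H : Subgroup G) : Prop :=
  IsKUSubnormalIn H ⊤

/-- `H` is `𝔘`-subnormal in `G`: there is a chain of subgroups
`H = H₀ ≤ H₁ ≤ ⋯ ≤ Hₙ = G` with `H_i` modulo the core of `H_{i-1}` in `H_i`
supersoluble at each step. -/
def IsUSubnormal {G : Type*} [Group G] (H : Subgroup G) : Prop :=
  ∃ (n : ℕ) (c : Fin (n + 1) → Subgroup G),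
    c 0 = H ∧ c (Fin.last n) = ⊤ ∧
    ∀ i : Fin n, c i.castSucc ≤ c i.succ ∧
      IsSupersoluble (↥(c i.succ) ⧸ ((c i.castSucc).subgroupOf (c i.succ)).normalCore)

/-- The supersoluble residual `G^𝔘` of `G`: the intersection of all normal subgroups `N`
of `G` with `G/N` supersoluble. -/
def ssResidual (G : Type*) [Group G] : Subgroup G :=
  ⨅ N ∈ {N : Subgroup G | ∃ hN : N.Normal, haveI := hN; IsSupersoluble (G ⧸ N)}, N

/-- `N` is a minimal normal subgroup of `G`. -/
def IsMinimalNormal {G : Type*} [Group G] (N : Subgroup G) : Prop :=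
  N.Normal ∧ N ≠ ⊥ ∧ ∀ M : Subgroup G, M.Normal → M ≤ N → M ≠ ⊥ → M = N

/-- `G` is minimal nonsupersoluble: not supersoluble, but all proper subgroups are. -/
def IsMinimalNonsupersoluble (G : Type*) [Group G] : Prop :=
  ¬ IsSupersoluble G ∧ ∀ H : Subgroup G, H ≠ ⊤ → IsSupersoluble H

/-- `G` is an `SDH`-group: minimal nonsupersoluble with `G^𝔘` a minimal normal subgroup. -/
def IsSDH (G : Type*) [Group G] : Prop :=
  IsMinimalNonsupersoluble G ∧ IsMinimalNormal (ssResidual G)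

/-- `H` is a Sylow `p`-subgroup of its ambient (finite) group. -/
def IsSylowSubgroup {G : Type*} [Group G] (p : ℕ) (H : Subgroup G) : Prop :=
  IsPGroup p H ∧ ¬ p ∣ H.index

/-- A finite group is Ore dispersive if, enumerating the prime divisors of `|G|`
in decreasing order as `p₁ > p₂ > ⋯ > pₙ`, for every `i` it has a normal subgroup of
order `p₁^{a₁} ⋯ p_i^{a_i}`. -/
def OreDispersive (G : Type*) [Group G] : Prop :=
  ∀ p : ℕ, p.Prime → ∃ N : Subgroup G, N.Normal ∧
    Nat.card N =
      ∏ q ∈ (Nat.card G).primeFactors.filter (fun q => p ≤ q),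
        q ^ (Nat.card G).factorization q

/-- `A/B` is a chief factor of `G`. -/
def IsChiefFactor {G : Type*} [Group G] (A B : Subgroup G) : Prop :=
  A.Normal ∧ B ≤ A ∧ ∃ hB : B.Normal,
    haveI := hB
    IsMinimalNormal (A.map (QuotientGroup.mk' B))

/-- The subgroups `H` and `K` of `G` are conjugate in `G`. -/
def ConjSubgroup {G : Type*} [Group G] (H K : Subgroup G) : Prop :=
  ∃ g : G, K = H.map (MulAut.conj g).toMonoidHom

/-- The Frattini subgroup of a subgroup `H` of `G`, as a subgroup of `G`. -/
def frattiniIn {G : Type*} [Group G] (H : Subgroup G) : Subgroup G :=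
  (frattini H).map H.subtype

/-- `G = P ⋊ (Q ⋊ R)` as an internal statement about subgroups `P`, `Q`, `R` of `G`. -/
def IsInternalSemidirect3 {G : Type*} [Group G] (P Q R : Subgroup G) : Prop :=
  P.Normal ∧ P ⊓ (Q ⊔ R) = ⊥ ∧ P ⊔ Q ⊔ R = ⊤ ∧
    (Q.subgroupOf (Q ⊔ R)).Normal ∧ Q ⊓ R = ⊥

/-- `G = P ⋊ (Q ⋊ (R ⋊ T))` as an internal statement about subgroups of `G`. -/
def IsInternalSemidirect4 {G : Type*} [Group G] (P Q R T : Subgroup G) : Prop :=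
  P.Normal ∧ P ⊓ (Q ⊔ R ⊔ T) = ⊥ ∧ P ⊔ Q ⊔ R ⊔ T = ⊤ ∧
    (Q.subgroupOf (Q ⊔ R ⊔ T)).Normal ∧ Q ⊓ (R ⊔ T) = ⊥ ∧
    (R.subgroupOf (R ⊔ T)).Normal ∧ R ⊓ T = ⊥

/-!
By Frobenius' criterion for a normal `p`-complement, applied to the smallest prime divisor of
`|G|`, and the Sylow towers of supersoluble groups, `G` has a nontrivial normal Sylow subgroup
`P`; let `H` be a complement. As `G / P` is supersoluble, no cyclic `P / Φ(P)` is possible: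
`P` would be cyclic and `G` supersoluble.

Let `R` be the least normal subgroup of `H` with `H / R` abelian of exponent dividing `p - 1`, and
let `M < P` be normal in `G`. Then `MH` is a proper subgroup, hence supersoluble, so `R`
centralises `M`. If `R` centralised `P` too, `G` would induce on each of its chief factors below
`P` an abelian group of exponent dividing `p - 1`, whose elements have eigenvalues in `𝔽ₚ`; these
factors would be cyclic and `G` supersoluble. Hence the normal closure `B` of `R` satisfies
`[P, B] = P`, and the transfer of `B` into `P` shows `M ≤ [P, P] ≤ Φ(P)`. So every normal subgroup
of `G` properly contained in `P` lies in `Φ(P)`; this makes `P / Φ(P)` a chief factor and forces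
`P` to be the supersoluble residual.
-/

section CyclicSeries

variable {G G' : Type*} [Group G] [Group G']

lemma isCyclic_map_iff (f : G →* G') (B : Subgroup G) :
    IsCyclic (B.map f) ↔ ∃ b ∈ B, B ≤ zpowers b ⊔ f.ker := by
  simp_rw [isCyclic_iff_exists_zpowers_eq_top, ← Subgroup.map_le_map_iff, MonoidHom.map_zpowers]
  constructor
  · rintro ⟨⟨_, b, hb, rfl⟩, hgen⟩
    refine ⟨b, hb, fun x hx => ?_⟩
    obtain ⟨k, hk⟩ := mem_zpowers_iff.1 (hgen ▸ mem_top (⟨x, hx⟩ : B.map f))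
    exact ⟨k, congrArg Subtype.val hk⟩
  · rintro ⟨b, hb, hgen⟩
    refine ⟨⟨f b, mem_map_of_mem f hb⟩, (eq_top_iff' _).2 fun ⟨x, hx⟩ => ?_⟩
    obtain ⟨k, hk⟩ := mem_zpowers_iff.1 (hgen hx)
    exact ⟨k, Subtype.ext hk⟩

lemma sup_inf_le_inf_sup_of_le {A C Z : Subgroup G} [C.Normal] (hZ : Z ≤ A) :
    (Z ⊔ C) ⊓ A ≤ Z ⊔ C ⊓ A := by
  rintro x ⟨hx, hxA⟩
  obtain ⟨z, hz, c, hc, rfl⟩ := mem_sup_of_normal_right.1 hx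
  exact mul_mem_sup hz ⟨hc, (A.mul_mem_cancel_left (hZ hz)).1 hxA⟩

/-- `A` and `B` are consecutive terms of a normal series with cyclic factors: both are normal and
`B / A` is cyclic. The cyclicity is expressed inside `G`, which avoids quotients of subgroups. -/
def IsCyclicStep (A B : Subgroup G) : Prop :=
  A.Normal ∧ B.Normal ∧ ∃ b, B = A ⊔ zpowers b

/-- There is a series of normal subgroups from `A` up to `B` with cyclic factors. -/
def HasCyclicSeries (A B : Subgroup G) : Prop :=
  Relation.ReflTransGen IsCyclicStep A B

lemma IsCyclicStep.le {A B : Subgroup G} (h : IsCyclicStep A B) : A ≤ B := by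
  obtain ⟨-, -, b, rfl⟩ := h
  exact le_sup_left

lemma isCyclic_quotient_subgroupOf_iff {A B : Subgroup G} [A.Normal] (hAB : A ≤ B) :
    IsCyclic (B ⧸ A.subgroupOf B) ↔ ∃ b, B = A ⊔ zpowers b := by
  have hgen (b : B) : ⊤ ≤ zpowers b ⊔ A.subgroupOf B ↔ B = A ⊔ zpowers (b : G) := by
    rw [← map_subtype_le_map_subtype, ← MonoidHom.range_eq_map, B.range_subtype, Subgroup.map_sup,
      map_subgroupOf_eq_of_le hAB, MonoidHom.map_zpowers, sup_comm, coe_subtype]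
    exact ⟨fun h => h.antisymm (sup_le hAB (zpowers_le.2 b.2)), fun h => h.le⟩
  rw [← topEquiv.isCyclic, ← map_top_of_surjective _ (QuotientGroup.mk'_surjective _),
    isCyclic_map_iff, QuotientGroup.ker_mk']
  constructor
  · rintro ⟨b, -, hb⟩
    exact ⟨b, (hgen b).1 hb⟩
  · rintro ⟨b, hb⟩
    exact ⟨⟨b, hb ▸ mem_sup_right (mem_zpowers b)⟩, mem_top _, (hgen _).2 hb⟩

lemma hasCyclicSeries_iff_exists_relSeries {A B : Subgroup G} :
    HasCyclicSeries A B ↔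
      ∃ s : RelSeries {(X, Y) : Subgroup G × Subgroup G | IsCyclicStep X Y},
        s.head = A ∧ s.last = B := by
  constructor
  · intro h
    induction h with
    | refl => exact ⟨RelSeries.singleton _ A, rfl, rfl⟩
    | @tail B C _ hBC ih =>
      obtain ⟨s, hhead, rfl⟩ := ih
      exact ⟨s.snoc C hBC, by simpa using hhead, by simp⟩
  · rintro ⟨s, rfl, rfl⟩
    have (i : Fin (s.length + 1)) : HasCyclicSeries s.head (s i) := by
      induction i using Fin.induction with
      | zero => exact .refl
      | succ i ih => exact ih.tail (s.step i)
    exact this (Fin.last _)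

lemma isSupersoluble_iff_hasCyclicSeries :
    IsSupersoluble G ↔ HasCyclicSeries (⊥ : Subgroup G) ⊤ := by
  rw [hasCyclicSeries_iff_exists_relSeries]
  constructor
  · rintro ⟨n, c, hc, h0, hn, hs⟩
    refine ⟨⟨n, c, fun i => ⟨hc _, hc _, ?_⟩⟩, h0, hn⟩
    have := hc i.castSucc
    exact (isCyclic_quotient_subgroupOf_iff (hs i).1).1 (hs i).2
  · rintro ⟨s, h0, hn⟩
    refine ⟨s.length, s, fun i => ?_, h0, hn, fun i => ⟨(s.step i).le, ?_⟩⟩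
    · cases i using Fin.cases with
      | zero => exact (show s 0 = ⊥ from h0) ▸ normal_bot
      | succ i => exact (s.step i).2.1
    · have := (s.step i).1
      exact (isCyclic_quotient_subgroupOf_iff (s.step i).le).2 (s.step i).2.2

lemma HasCyclicSeries.map {A B : Subgroup G} (h : HasCyclicSeries A B) {f : G →* G'}
    (hf : Function.Surjective f) : HasCyclicSeries (A.map f) (B.map f) := by
  refine Relation.ReflTransGen.lift (Subgroup.map f) ?_ _ _ h
  rintro A _ ⟨hA, hB, b, rfl⟩
  exact ⟨hA.map f hf, hB.map f hf, f b, by rw [Subgroup.map_sup, MonoidHom.map_zpowers]⟩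

lemma HasCyclicSeries.comap {A B : Subgroup G'} (h : HasCyclicSeries A B) {f : G →* G'}
    (hf : Function.Surjective f) : HasCyclicSeries (A.comap f) (B.comap f) := by
  refine Relation.ReflTransGen.lift (Subgroup.comap f) ?_ _ _ h
  rintro A _ ⟨hA, hB, b, rfl⟩
  obtain ⟨b, rfl⟩ := hf b
  refine ⟨hA.comap f, hB.comap f, b, ?_⟩
  rw [← MonoidHom.map_zpowers, ← comap_sup_eq _ _ _ hf, comap_map_eq, ← sup_assoc,
    sup_right_comm, sup_of_le_left (f.ker_le_comap A)]

lemma IsSupersoluble.of_surjective (h : IsSupersoluble G) {f : G →* G'}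
    (hf : Function.Surjective f) : IsSupersoluble G' := by
  rw [isSupersoluble_iff_hasCyclicSeries] at h ⊢
  simpa only [Subgroup.map_bot, map_top_of_surjective f hf] using h.map hf

lemma isSupersoluble_quotient_iff {N : Subgroup G} [N.Normal] :
    IsSupersoluble (G ⧸ N) ↔ HasCyclicSeries N ⊤ := by
  have hsurj := QuotientGroup.mk'_surjective N
  rw [isSupersoluble_iff_hasCyclicSeries]
  constructor <;> intro h
  · simpa only [MonoidHom.comap_bot, QuotientGroup.ker_mk', comap_top] using h.comap hsurj
  · simpa only [QuotientGroup.map_mk'_self, map_top_of_surjective _ hsurj] using h.map hsurj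

lemma HasCyclicSeries.exists_normal_sup_zpowers {N T A B : Subgroup G} (h : HasCyclicSeries N T)
    [A.Normal] [B.Normal] (hN : N ⊓ A ≤ B) (hT : ¬ T ⊓ A ≤ B) :
    ∃ a ∈ A, a ∉ B ∧ (B ⊔ zpowers a).Normal := by
  induction h with
  | refl => exact absurd hN hT
  | @tail C D _ hCD ih =>
    by_cases hC : C ⊓ A ≤ B
    -- `D = C ⊔ zpowers d` is the first term with `D ⊓ A` not contained in `B`.
    · obtain ⟨_, hD, d, rfl⟩ := hCD
      have hcyc : IsCyclic ((C ⊔ zpowers d).map (QuotientGroup.mk' C)) := by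
        rw [Subgroup.map_sup, QuotientGroup.map_mk'_self, bot_sup_eq, MonoidHom.map_zpowers]
        infer_instance
      have hinf : (C ⊔ zpowers d) ⊓ A ≤ C ⊔ zpowers d := inf_le_left
      obtain ⟨a, ⟨haD, haA⟩, ha⟩ := (isCyclic_map_iff _ _).1
        (isCyclic_of_le (map_mono (f := QuotientGroup.mk' C) hinf))
      rw [QuotientGroup.ker_mk'] at ha
      have hle : (C ⊔ zpowers d) ⊓ A ≤ B ⊔ zpowers a :=
        calc (C ⊔ zpowers d) ⊓ A ≤ (zpowers a ⊔ C) ⊓ A := le_inf ha inf_le_right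
          _ ≤ zpowers a ⊔ C ⊓ A := sup_inf_le_inf_sup_of_le (zpowers_le.2 haA)
          _ ≤ zpowers a ⊔ B := sup_le_sup_left hC _
          _ = B ⊔ zpowers a := sup_comm _ _
      have heq : B ⊔ zpowers a = B ⊔ (C ⊔ zpowers d) ⊓ A :=
        (sup_le_sup_left (zpowers_le.2 (mem_inf.2 ⟨haD, haA⟩)) _).antisymm
          (sup_le le_sup_left hle)
      refine ⟨a, haA, fun haB => hT ?_, heq ▸ inferInstance⟩
      rwa [sup_of_le_left (zpowers_le.2 haB)] at hle
    · exact ih hC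

lemma HasCyclicSeries.of_forall_exists [Finite G] {P : Subgroup G} [hP : P.Normal]
    (h : ∀ X : Subgroup G, X.Normal → X < P → ∃ v ∈ P, v ∉ X ∧ (X ⊔ zpowers v).Normal) :
    HasCyclicSeries ⊥ P := by
  obtain ⟨X, ⟨hXP, hX, hseries⟩, hmax⟩ :=
    (Set.toFinite {X : Subgroup G | X ≤ P ∧ X.Normal ∧ HasCyclicSeries ⊥ X}).exists_maximal
      ⟨⊥, bot_le, normal_bot, .refl⟩
  obtain rfl | hlt := hXP.eq_or_lt
  · exact hseries
  · obtain ⟨v, hvP, hvX, hv⟩ := h X hX hlt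
    have hstep : HasCyclicSeries ⊥ (X ⊔ zpowers v) := hseries.tail ⟨hX, hv, v, rfl⟩
    have hle := hmax ⟨sup_le hXP (zpowers_le.2 hvP), hv, hstep⟩ le_sup_left
    exact absurd (hle (mem_sup_right (mem_zpowers v))) hvX

lemma IsSupersoluble.exists_normal_prime_card [Finite G] (h : IsSupersoluble G) {A : Subgroup G}
    [A.Normal] (hA : A ≠ ⊥) :
    ∃ L : Subgroup G, L.Normal ∧ L ≤ A ∧ (Nat.card L).Prime := by
  obtain ⟨a, haA, ha, hnormal⟩ :=
    (isSupersoluble_iff_hasCyclicSeries.1 h).exists_normal_sup_zpowers (A := A) (B := ⊥)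
      inf_le_left (by rwa [top_inf_eq, le_bot_iff])
  rw [bot_sup_eq] at hnormal
  rw [mem_bot, ← orderOf_eq_one_iff] at ha
  obtain ⟨p, hp, hpa⟩ := Nat.exists_prime_and_dvd ha
  refine ⟨zpowers (a ^ (orderOf a / p)), ⟨?_⟩, ?_, ?_⟩
  · rintro _ ⟨k, rfl⟩ g
    obtain ⟨m, hm⟩ := hnormal.conj_mem a (mem_zpowers a) g
    refine ⟨m * k, ?_⟩
    simp only at hm ⊢
    rw [← conj_zpow, ← conj_pow, ← hm, ← zpow_natCast, ← zpow_natCast]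
    simp only [← zpow_mul]
    congr 1
    ring
  · exact zpowers_le.2 (pow_mem haA _)
  · rwa [Nat.card_zpowers, orderOf_pow_orderOf_div (orderOf_pos a).ne' hpa]

end CyclicSeries

section CyclicNormal

variable {G : Type*} [Group G]

lemma exists_hom_units_ker_le_centralizer (L : Subgroup G) [L.Normal] [IsCyclic L] :
    ∃ f : G →* (ZMod (Nat.card L))ˣ, f.ker ≤ centralizer L := by
  refine ⟨(IsCyclic.mulAutMulEquiv L).toMonoidHom.comp MulAut.conjNormal, fun g hg => ?_⟩
  rw [MonoidHom.mem_ker, MonoidHom.comp_apply, MulEquiv.coe_toMonoidHom,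
    MulEquiv.map_eq_one_iff] at hg
  refine mem_centralizer_iff.2 fun l hl => ?_
  have hconj := congrArg Subtype.val (DFunLike.congr_fun hg ⟨l, hl⟩)
  rw [MulAut.conjNormal_apply, MulAut.one_apply] at hconj
  exact (mul_inv_eq_iff_eq_mul.1 hconj).symm

lemma card_units_zmod_prime {p : ℕ} (hp : p.Prime) : Nat.card (ZMod p)ˣ = p - 1 := by
  have : Fact p.Prime := ⟨hp⟩
  rw [Nat.card_eq_fintype_card, ZMod.card_units]

lemma le_centralizer_of_prime_card_le_prime_factors {L H : Subgroup G} [L.Normal]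
    (hL : (Nat.card L).Prime) (hH : ∀ r : ℕ, r.Prime → r ∣ Nat.card H → Nat.card L ≤ r) :
    H ≤ centralizer L := by
  have : IsCyclic L := isCyclic_of_prime_card (hp := ⟨hL⟩) rfl
  obtain ⟨f, hf⟩ := exists_hom_units_ker_le_centralizer L
  refine fun g hg => hf (orderOf_eq_one_iff.1 ?_)
  by_contra hne
  obtain ⟨r, hr, hrg⟩ := Nat.exists_prime_and_dvd hne
  have hle : Nat.card L ≤ r :=
    hH r hr ((hrg.trans (orderOf_map_dvd f g)).trans (H.orderOf_dvd_natCard hg))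
  have hdvd : r ∣ Nat.card L - 1 :=
    card_units_zmod_prime hL ▸ hrg.trans (orderOf_dvd_natCard (f g))
  have := Nat.le_of_dvd (Nat.sub_pos_of_lt hL.one_lt) hdvd
  have := hL.pos
  omega

end CyclicNormal

section UpperHall

variable {G : Type*} [Group G]

lemma characteristic_of_coprime_card_index {K : Subgroup G} [K.Normal]
    (hK : (Nat.card K).Coprime K.index) : K.Characteristic := by
  refine characteristic_iff_le_comap.2 fun φ x hx => ?_
  have hcard : (φ x : G ⧸ K) ^ Nat.card K = 1 := by
    have : x ^ Nat.card K = 1 := orderOf_dvd_iff_pow_eq_one.1 (K.orderOf_dvd_natCard hx)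
    rw [← QuotientGroup.mk_pow, ← map_pow, this, map_one, QuotientGroup.mk_one]
  have hindex : (φ x : G ⧸ K) ^ K.index = 1 := pow_card_eq_one'
  have := pow_gcd_eq_one.2 ⟨hcard, hindex⟩
  rwa [hK.gcd_eq_one, pow_one, QuotientGroup.eq_one_iff] at this

lemma normal_of_isComplement'_of_le_center {L K : Subgroup G} (hL : L ≤ center G)
    (hLK : L.IsComplement' K) : K.Normal := by
  rw [← normalizer_eq_top_iff, eq_top_iff, ← hLK.sup_eq_top]
  exact sup_le (hL.trans (center_le_normalizer _)) le_normalizer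

/-- `N` is a Hall subgroup of `G` for the set of primes `≥ n`: these primes are the terms of the
Sylow tower which an Ore dispersive group has. -/
def IsUpperHall (n : ℕ) (N : Subgroup G) : Prop :=
  (∀ r : ℕ, r.Prime → r ∣ Nat.card N → n ≤ r) ∧ ∀ r : ℕ, r.Prime → r ∣ N.index → r < n

lemma IsUpperHall.coprime_card_index {n : ℕ} {N : Subgroup G} (h : IsUpperHall n N) :
    (Nat.card N).Coprime N.index :=
  Nat.coprime_of_dvd fun r hr hcard hindex => (h.1 r hr hcard).not_gt (h.2 r hr hindex)

lemma exists_normal_card_eq_relIndex {L N : Subgroup G} [N.Normal] (hLN : L ≤ N)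
    (hcentral : N ≤ centralizer L) (hcop : (Nat.card L).Coprime (L.relIndex N)) :
    ∃ K : Subgroup G, K.Normal ∧ Nat.card K = L.relIndex N ∧ K.index = Nat.card L * N.index := by
  have hcenter : L.subgroupOf N ≤ center N := fun l hl =>
    mem_center_iff.2 fun g => Subtype.ext (hcentral g.2 l hl).symm
  have hcard : Nat.card (L.subgroupOf N) = Nat.card L :=
    Nat.card_congr (subgroupOfEquivOfLe hLN).toEquiv
  have : (L.subgroupOf N).Normal :=
    normal_subgroupOf_of_le_normalizer (hcentral.trans (centralizer_le_normalizer _))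
  obtain ⟨K, hLK⟩ := exists_right_complement'_of_coprime (hcard.symm ▸ hcop)
  have hcardK : Nat.card K = L.relIndex N := hLK.symm.index_eq_card.symm
  have hindexK : K.index = Nat.card L := hLK.index_eq_card.trans hcard
  have := normal_of_isComplement'_of_le_center hcenter hLK
  have : K.Characteristic :=
    characteristic_of_coprime_card_index (hindexK ▸ hcardK ▸ hcop.symm)
  exact ⟨K.map N.subtype, inferInstance,
    (card_map_of_injective N.subtype_injective).trans hcardK, by rw [index_map_subtype, hindexK]⟩

lemma exists_isUpperHall_of_prime_card_normal {n : ℕ} {L N : Subgroup G} [L.Normal]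
    [hN : N.Normal] (hL : (Nat.card L).Prime) (hLN : L ≤ N)
    (hrel : ∀ r : ℕ, r.Prime → r ∣ L.relIndex N → n ≤ r)
    (hindex : ∀ r : ℕ, r.Prime → r ∣ N.index → r < n) :
    ∃ K : Subgroup G, K.Normal ∧ IsUpperHall n K := by
  have hcard : Nat.card N = Nat.card L * L.relIndex N := by
    rw [← relIndex_bot_left, ← relIndex_bot_left, relIndex_mul_relIndex _ _ _ bot_le hLN]
  obtain hle | hlt := le_or_gt n (Nat.card L)
  · refine ⟨N, hN, fun r hr hd => ?_, hindex⟩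
    obtain hd | hd := hr.dvd_mul.1 (hcard ▸ hd)
    · rwa [(Nat.prime_dvd_prime_iff_eq hr hL).1 hd]
    · exact hrel r hr hd
  · have hcentral : N ≤ centralizer L := by
      refine le_centralizer_of_prime_card_le_prime_factors hL fun r hr hd => ?_
      obtain hd | hd := hr.dvd_mul.1 (hcard ▸ hd)
      · exact ((Nat.prime_dvd_prime_iff_eq hr hL).1 hd).ge
      · exact hlt.le.trans (hrel r hr hd)
    have hcop : (Nat.card L).Coprime (L.relIndex N) :=
      hL.coprime_iff_not_dvd.2 fun hd => hlt.not_ge (hrel _ hL hd)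
    obtain ⟨K, hK, hcardK, hindexK⟩ := exists_normal_card_eq_relIndex hLN hcentral hcop
    refine ⟨K, hK, hcardK ▸ hrel, fun r hr hd => ?_⟩
    obtain hd | hd := hr.dvd_mul.1 (hindexK ▸ hd)
    · rwa [(Nat.prime_dvd_prime_iff_eq hr hL).1 hd]
    · exact hindex r hr hd

theorem IsSupersoluble.exists_normal_isUpperHall [Finite G] (h : IsSupersoluble G) (n : ℕ) :
    ∃ K : Subgroup G, K.Normal ∧ IsUpperHall n K := by
  induction hm : Nat.card G using Nat.strong_induction_on generalizing G with
  | _ m ih =>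
  subst hm
  obtain hG | hG := subsingleton_or_nontrivial G
  · refine ⟨⊥, normal_bot, fun r hr hd => ?_, fun r hr hd => ?_⟩
    · exact absurd (card_bot (G := G) ▸ hd) hr.not_dvd_one
    · rw [index_bot, Nat.card_unique] at hd
      exact absurd hd hr.not_dvd_one
  · obtain ⟨L, _, -, hL⟩ := h.exists_normal_prime_card (top_ne_bot (α := Subgroup G))
    have hlt : Nat.card (G ⧸ L) < Nat.card G := by
      rw [L.card_eq_card_quotient_mul_card_subgroup]
      exact lt_mul_of_one_lt_right Nat.card_pos hL.one_lt
    have hsurj := QuotientGroup.mk'_surjective L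
    obtain ⟨N, hN, hcard, hindex⟩ := ih _ hlt (h.of_surjective hsurj) rfl
    rw [← map_comap_eq_self_of_surjective hsurj N, ← relIndex_ker, QuotientGroup.ker_mk'] at hcard
    rw [← index_comap_of_surjective N hsurj] at hindex
    exact exists_isUpperHall_of_prime_card_normal hL (QuotientGroup.le_comap_mk' L N) hcard hindex

end UpperHall

section Fusion

open scoped commutatorElement

variable {G : Type*} [Group G] {p : ℕ}

/-- Frobenius' condition for the existence of a normal `p`-complement: `N_G(D) / C_G(D)` is a
`p`-group for each `p`-subgroup `D` of `G`. -/
def HasPGroupAutomizers (p : ℕ) (G : Type*) [Group G] : Prop :=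
  ∀ D : Subgroup G, IsPGroup p D → ∀ n ∈ normalizer (D : Set G),
    ∃ k : ℕ, n ^ p ^ k ∈ centralizer (D : Set G)

lemma mem_sylow_smul_iff {P : Sylow p G} {g x : G} : x ∈ g • P ↔ g⁻¹ * x * g ∈ P := by
  change x ∈ ((g • P : Sylow p G) : Subgroup G) ↔ g⁻¹ * x * g ∈ (P : Subgroup G)
  rw [Sylow.coe_subgroup_smul, mem_pointwise_smul_iff_inv_smul_mem, ← map_inv, MulAut.smul_def,
    MulAut.conj_apply, inv_inv]

lemma sup_sylow_eq_top [Finite G] [hp : Fact p.Prime] {C : Subgroup G} [C.Normal]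
    (hC : ∀ g : G, ∃ k : ℕ, g ^ p ^ k ∈ C) (Q : Sylow p G) : C ⊔ Q = ⊤ := by
  have hquot : IsPGroup p (G ⧸ C) := fun g => by
    induction g using QuotientGroup.induction_on with
    | _ g =>
      obtain ⟨k, hk⟩ := hC g
      exact ⟨k, by rwa [← QuotientGroup.mk_pow, QuotientGroup.eq_one_iff]⟩
  obtain ⟨j, hj⟩ := hquot.exists_card_eq
  have hcop : (C.index).Coprime (Q : Subgroup G).index := by
    rw [index_eq_card, hj]
    exact Nat.Coprime.pow_left _ ((hp.out.coprime_iff_not_dvd).2 Q.not_dvd_index)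
  exact index_eq_one.1 (Nat.eq_one_of_dvd_coprimes hcop (index_dvd_of_le le_sup_left)
    (index_dvd_of_le le_sup_right))

lemma HasPGroupAutomizers.centralizer_sup_sylow_eq_top [Finite G] [Fact p.Prime]
    (h : HasPGroupAutomizers p G) {D : Subgroup G} (hD : IsPGroup p D)
    (Q : Sylow p (normalizer (D : Set G))) :
    (centralizer (D : Set G)).subgroupOf (normalizer (D : Set G)) ⊔ Q = ⊤ :=
  sup_sylow_eq_top (C := (centralizer (D : Set G)).subgroupOf _) (fun n => h D hD n n.2) Q

lemma HasPGroupAutomizers.exists_mem_centralizer_inf_normalizer_le [Finite G] [Fact p.Prime]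
    (h : HasPGroupAutomizers p G) {D : Subgroup G} (hD : IsPGroup p D) (P S : Sylow p G) :
    ∃ c ∈ centralizer (D : Set G), ∃ Q : Sylow p G,
      (P : Subgroup G) ⊓ normalizer (D : Set G) ≤ Q ∧
      (S : Subgroup G) ⊓ normalizer (D : Set G) ≤ (c • Q : Sylow p G) := by
  have hinj := (normalizer (D : Set G)).subtype_injective
  obtain ⟨P', hP'⟩ := (P.2.comap_of_injective _ hinj).exists_le_sylow
  obtain ⟨S', hS'⟩ := (S.2.comap_of_injective _ hinj).exists_le_sylow
  obtain ⟨n, rfl⟩ := MulAction.exists_smul_eq (normalizer (D : Set G)) P' S'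
  obtain ⟨c, hc, u, hu, rfl⟩ := mem_sup_of_normal_left.1
    (h.centralizer_sup_sylow_eq_top hD P' ▸ mem_top n)
  have hu' : u • P' = P' := Sylow.smul_eq_iff_mem_normalizer.2 (le_normalizer hu)
  rw [mul_smul, hu'] at hS'
  obtain ⟨Q, hQ⟩ := (P'.2.map (normalizer (D : Set G)).subtype).exists_le_sylow
  refine ⟨c, hc, Q, fun x hx => hQ ⟨⟨x, hx.2⟩, hP' hx.1, rfl⟩, fun x hx => ?_⟩
  have hxS' : (⟨x, hx.2⟩ : normalizer (D : Set G)) ∈ c • P' := hS' hx.1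
  exact mem_sylow_smul_iff.2 (hQ ⟨_, mem_sylow_smul_iff.1 hxS', rfl⟩)

lemma lt_inf_normalizer_of_isPGroup [Finite G] [Fact p.Prime] {D P : Subgroup G}
    (hP : IsPGroup p P) (hD : D < P) : D < P ⊓ normalizer (D : Set G) := by
  have := hP.isNilpotent
  have hlt : D.subgroupOf P < ⊤ := lt_top_iff_ne_top.2 fun h => hD.not_ge (subgroupOf_eq_top.1 h)
  have hlt' := Group.normalizerCondition_of_isNilpotent (G := P) _ hlt
  rwa [← subgroupOf_normalizer_eq hD.le, ← map_subtype_lt_map_subtype, subgroupOf_map_subtype,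
    subgroupOf_map_subtype, inf_of_le_left hD.le, inf_comm] at hlt'

theorem HasPGroupAutomizers.exists_mem_centralizer_smul_eq [Finite G] [Fact p.Prime]
    (h : HasPGroupAutomizers p G) {X : Subgroup G} (P S : Sylow p G) (hXP : X ≤ P) (hXS : X ≤ S) :
    ∃ c ∈ centralizer (X : Set G), c • P = S := by
  induction hD : (P : Subgroup G) ⊓ S using WellFoundedGT.induction generalizing P S with
  | _ D ih =>
  obtain rfl | hne := eq_or_ne P S
  · exact ⟨1, one_mem _, one_smul _ _⟩
  have hlt (R T : Sylow p G) (hRT : R ≠ T) : (R : Subgroup G) ⊓ T < R :=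
    inf_lt_left.2 fun hle => hRT (Sylow.ext (R.3 T.2 hle)).symm
  have hDp : IsPGroup p D := hD ▸ P.2.to_le inf_le_left
  obtain ⟨c, hc, Q, hPQ, hSQ⟩ := h.exists_mem_centralizer_inf_normalizer_le hDp P S
  have hDP : D < (P : Subgroup G) ⊓ Q :=
    (lt_inf_normalizer_of_isPGroup P.2 (hD ▸ hlt P S hne)).trans_le (le_inf inf_le_left hPQ)
  have hDS : D < ((c • Q : Sylow p G) : Subgroup G) ⊓ S :=
    (lt_inf_normalizer_of_isPGroup S.2 (hD ▸ inf_comm (S : Subgroup G) P ▸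
      hlt S P hne.symm)).trans_le (le_inf hSQ inf_le_left)
  have hXD : X ≤ D := hD ▸ le_inf hXP hXS
  obtain ⟨a, ha, rfl⟩ := ih _ hDP P Q hXP (hXD.trans (hDP.le.trans inf_le_right)) rfl
  obtain ⟨b, hb, rfl⟩ := ih _ hDS _ S (hXD.trans (hDS.le.trans inf_le_left)) hXS rfl
  exact ⟨b * (c * a), mul_mem hb (mul_mem (centralizer_le hXD hc) ha), by simp only [mul_smul]⟩

theorem HasPGroupAutomizers.exists_mem_mul_mem_centralizer [Finite G] [Fact p.Prime]
    (h : HasPGroupAutomizers p G) (P : Sylow p G) {X : Subgroup G} (hX : X ≤ P) {g : G}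
    (hg : ∀ x ∈ X, g * x * g⁻¹ ∈ P) : ∃ u ∈ P, ∃ c ∈ centralizer (X : Set G), g = u * c := by
  have hXg : X ≤ (g⁻¹ • P : Sylow p G) := fun x hx =>
    mem_sylow_smul_iff.2 ((inv_inv g).symm ▸ hg x hx)
  obtain ⟨c, hc, hcg⟩ := h.exists_mem_centralizer_smul_eq P _ hX hXg
  have hgc : g * c ∈ normalizer (P : Set G) := by
    rw [← Sylow.smul_eq_iff_mem_normalizer, mul_smul, hcg, smul_inv_smul]
  have hsup := h.centralizer_sup_sylow_eq_top P.2 (P.subtype le_normalizer)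
  rw [sup_comm] at hsup
  obtain ⟨u, hu, d, hd, hud⟩ := mem_sup_of_normal_right.1
    (hsup ▸ mem_top (⟨g * c, hgc⟩ : normalizer (P : Set G)))
  refine ⟨u, hu, d * c⁻¹, mul_mem (centralizer_le hX hd) (inv_mem hc), ?_⟩
  rw [← mul_assoc, eq_mul_inv_iff_mul_eq]
  exact (congrArg Subtype.val hud).symm

lemma HasPGroupAutomizers.focalSubgroup_le [Finite G] [Fact p.Prime]
    (h : HasPGroupAutomizers p G) (P : Sylow p G) :
    (P : Subgroup G).focalSubgroup ≤ ⁅(P : Subgroup G), (P : Subgroup G)⁆ := by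
  rw [focalSubgroup_def, closure_le]
  rintro _ ⟨hg, x, hx, g, rfl⟩
  have hconj : ∀ y ∈ zpowers x, g * y * g⁻¹ ∈ P := by
    suffices g * x * g⁻¹ ∈ P by
      rintro _ ⟨k, rfl⟩
      exact conj_zpow (a := g) (b := x) (i := k) ▸ zpow_mem this k
    rw [← inv_mem_iff, conj_inv]
    have := mul_mem (inv_mem hx) hg
    rwa [commutatorElement_def, mul_assoc, mul_assoc, inv_mul_cancel_left, ← mul_assoc] at this
  obtain ⟨u, hu, c, hc, rfl⟩ := h.exists_mem_mul_mem_centralizer P (zpowers_le.2 hx) hconj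
  have hcx : c * x⁻¹ = x⁻¹ * c :=
    (mem_centralizer_iff.1 hc x⁻¹ (inv_mem (mem_zpowers x))).symm
  have : ⁅x, u * c⁆ = ⁅x, u⁆ :=
    calc x * (u * c) * x⁻¹ * (u * c)⁻¹ = x * u * (c * x⁻¹) * (u * c)⁻¹ := by group
      _ = x * u * x⁻¹ * u⁻¹ := by rw [hcx]; group
  exact this ▸ commutator_mem_commutator hx hu

lemma commutator_lt_of_isPGroup [Finite G] [Fact p.Prime] {P : Subgroup G}
    (hP : IsPGroup p P) (hne : P ≠ ⊥) : ⁅P, P⁆ < P := by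
  have := hP.isNilpotent
  have := P.nontrivial_iff_ne_bot.2 hne
  rw [← P.range_subtype, MonoidHom.range_eq_map, ← map_commutator, map_subtype_lt_map_subtype]
  exact Group.IsSolvable.commutator_lt_top_of_nontrivial P

theorem HasPGroupAutomizers.exists_normal_index_eq_prime_pow [Finite G] [Fact p.Prime]
    (h : HasPGroupAutomizers p G) (hp : p ∣ Nat.card G) :
    ∃ N : Subgroup G, N.Normal ∧ N ≠ ⊤ ∧ ∃ k, N.index = p ^ k := by
  obtain ⟨P⟩ : Nonempty (Sylow p G) := inferInstance
  have hlt : (P : Subgroup G).focalSubgroup < P :=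
    (h.focalSubgroup_le P).trans_lt (commutator_lt_of_isPGroup P.2 (P.ne_bot_of_dvd_card hp))
  refine ⟨(P : Subgroup G).transferFocal.ker, inferInstance, fun htop => hlt.ne ?_, ?_⟩
  · rw [← ker_transferFocal_inf_eq_focalSubgroup P, htop, top_inf_eq]
  · have e := transferFocal.quotientKerMulEquivQuotientFocalSubroupOf P
    rw [index_eq_card, Nat.card_congr e.toEquiv]
    exact (P.2.to_quotient _).exists_card_eq

end Fusion

section NormalSylow

variable {G : Type*} [Group G] {p : ℕ}

/-- `G` has a nontrivial normal Sylow subgroup, for some prime. -/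
def HasNormalSylow (G : Type*) [Group G] : Prop :=
  ∃ p : ℕ, p.Prime ∧ ∃ P : Sylow p G, (P : Subgroup G).Normal ∧ (P : Subgroup G) ≠ ⊥

lemma isPGroup_of_forall_prime_dvd_eq [Finite G] (h : ∀ r : ℕ, r.Prime → r ∣ Nat.card G → r = p) :
    IsPGroup p G :=
  IsPGroup.of_card (Nat.eq_prime_pow_of_unique_prime_dvd Nat.card_pos.ne' (h _))

lemma HasNormalSylow.of_isPGroup [Nontrivial G] (hp : p.Prime) (hG : IsPGroup p G) :
    HasNormalSylow G := by
  have : Fact p.Prime := ⟨hp⟩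
  have hG' : IsPGroup p (⊤ : Subgroup G) := hG.to_subgroup ⊤
  refine ⟨p, hp, hG'.toSylow (by rw [index_top]; exact hp.not_dvd_one), ?_, top_ne_bot⟩
  exact inferInstanceAs (⊤ : Subgroup G).Normal

lemma HasNormalSylow.of_normal_subgroup [Finite G] {K : Subgroup G} [K.Normal]
    (h : HasNormalSylow K) (hK : (Nat.card K).Coprime K.index) : HasNormalSylow G := by
  obtain ⟨q, hq, Q, hQ, hne⟩ := h
  have : Fact q.Prime := ⟨hq⟩
  have : (Q : Subgroup K).Characteristic :=
    characteristic_of_coprime_card_index Q.card_coprime_index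
  have hdvd : q ∣ Nat.card K :=
    (Q.2.card_eq_or_dvd.resolve_left (mt card_eq_one.1 hne)).trans (card_subgroup_dvd_card _)
  have hindex : ¬ q ∣ ((Q : Subgroup K).map K.subtype).index := by
    rw [index_map_subtype, hq.dvd_mul, not_or]
    exact ⟨Q.not_dvd_index, fun hd => Nat.not_coprime_of_dvd_of_dvd hq.one_lt hdvd hd hK⟩
  refine ⟨q, hq, (Q.2.map K.subtype).toSylow hindex, ?_, ?_⟩
  · exact inferInstanceAs ((Q : Subgroup K).map K.subtype).Normal
  · exact mt (map_eq_bot_iff_of_injective _ K.subtype_injective).1 hne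

lemma IsSupersoluble.hasNormalSylow [Finite G] [Nontrivial G] (h : IsSupersoluble G) :
    HasNormalSylow G := by
  obtain ⟨q, hq, hmax⟩ := (Nat.card G).primeFactors.exists_max_image id
    (Nat.nonempty_primeFactors.2 Finite.one_lt_card)
  have hq' := Nat.prime_of_mem_primeFactors hq
  have : Fact q.Prime := ⟨hq'⟩
  obtain ⟨K, hK, hcard, hindex⟩ := h.exists_normal_isUpperHall q
  have hKq : IsPGroup q K := isPGroup_of_forall_prime_dvd_eq fun r hr hd =>
    have hrG : r ∈ (Nat.card G).primeFactors :=
      Nat.mem_primeFactors.2 ⟨hr, hd.trans K.card_subgroup_dvd_card, Nat.card_pos.ne'⟩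
    (hmax r hrG).antisymm (hcard r hr hd)
  have hnd : ¬ q ∣ K.index := fun hd => (hindex q hq' hd).false
  refine ⟨q, hq', hKq.toSylow hnd, hK, ?_⟩
  rintro (rfl : K = ⊥)
  exact hnd (index_bot (G := G) ▸ Nat.dvd_of_mem_primeFactors hq)

lemma mem_centralizer_of_disjoint {D K : Subgroup G} [hK : K.Normal] (h : Disjoint D K) {x : G}
    (hxK : x ∈ K) (hxD : x ∈ normalizer (D : Set G)) : x ∈ centralizer (D : Set G) := by
  refine mem_centralizer_iff.2 fun d hd => ?_
  have hD : x * d * x⁻¹ * d⁻¹ ∈ D := mul_mem ((mem_normalizer_iff.1 hxD d).1 hd) (inv_mem hd)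
  have hK : x * (d * x⁻¹ * d⁻¹) ∈ K := mul_mem hxK (hK.conj_mem _ (inv_mem hxK) d)
  rw [← mul_assoc, ← mul_assoc] at hK
  exact (mul_inv_eq_iff_eq_mul.1 (mul_inv_eq_one.1 (h.le_bot ⟨hD, hK⟩))).symm

lemma hasPGroupAutomizers_of_normal [Finite G] [hp : Fact p.Prime] {K : Subgroup G} [K.Normal]
    (hK : ¬ p ∣ Nat.card K) (hquot : IsPGroup p (G ⧸ K)) : HasPGroupAutomizers p G := by
  intro D hD n hn
  obtain ⟨k, hk⟩ := hquot n
  rw [← QuotientGroup.mk_pow, QuotientGroup.eq_one_iff] at hk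
  obtain ⟨j, hj⟩ := hD.exists_card_eq
  have hdisj : Disjoint D K := disjoint_of_coprime_natCard
    (hj ▸ Nat.Coprime.pow_left j (hp.out.coprime_iff_not_dvd.2 hK))
  exact ⟨k, mem_centralizer_of_disjoint hdisj hk (pow_mem hn _)⟩

lemma IsUpperHall.map_subtype {n : ℕ} {N : Subgroup G} {K : Subgroup N} (hK : IsUpperHall n K)
    (hN : ∀ r : ℕ, r.Prime → r ∣ N.index → r < n) : IsUpperHall n (K.map N.subtype) := by
  refine ⟨fun r hr hd => hK.1 r hr ?_, fun r hr hd => ?_⟩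
  · rwa [card_map_of_injective N.subtype_injective] at hd
  · rw [index_map_subtype, hr.dvd_mul] at hd
    exact hd.elim (hK.2 r hr) (hN r hr)

lemma isPGroup_quotient_of_isUpperHall [Finite G]
    (hmin : ∀ r : ℕ, r.Prime → r ∣ Nat.card G → p ≤ r) {K : Subgroup G} [K.Normal]
    (hK : IsUpperHall (p + 1) K) : IsPGroup p (G ⧸ K) :=
  isPGroup_of_forall_prime_dvd_eq fun r hr hd =>
    (Nat.lt_succ_iff.1 (hK.2 r hr hd)).antisymm (hmin r hr (hd.trans K.index_dvd_card))

lemma IsSupersoluble.hasPGroupAutomizers [Finite G] [hp : Fact p.Prime] (h : IsSupersoluble G)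
    (hmin : ∀ r : ℕ, r.Prime → r ∣ Nat.card G → p ≤ r) : HasPGroupAutomizers p G := by
  obtain ⟨K, _, hK⟩ := h.exists_normal_isUpperHall (p + 1)
  exact hasPGroupAutomizers_of_normal (fun hd => (hK.1 p hp.out hd).not_gt p.lt_succ_self)
    (isPGroup_quotient_of_isUpperHall hmin hK)

lemma HasPGroupAutomizers.exists_pow_mem_centralizer {H : Subgroup G}
    (h : HasPGroupAutomizers p H) {D : Subgroup G} (hD : IsPGroup p D) (hDH : D ≤ H) {n : G}
    (hn : n ∈ normalizer (D : Set G)) (hnH : n ∈ H) :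
    ∃ k : ℕ, n ^ p ^ k ∈ centralizer (D : Set G) := by
  have hn' : (⟨n, hnH⟩ : H) ∈ normalizer (D.subgroupOf H : Set H) := by
    rwa [← subgroupOf_normalizer_eq hDH]
  obtain ⟨k, hk⟩ := h _ (hD.comap_of_injective _ H.subtype_injective) _ hn'
  refine ⟨k, mem_centralizer_iff.2 fun d hd => ?_⟩
  exact congrArg Subtype.val (mem_centralizer_iff.1 hk ⟨d, hDH hd⟩ hd)

lemma sylow_normal_of_sup_zpowers_eq_top {D : Subgroup G} [D.Normal] (hD : IsPGroup p D) {n : G}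
    (hn : D ⊔ zpowers n = ⊤) (P : Sylow p G) : (P : Subgroup G).Normal :=
  Subgroup.Normal.of_commutator_le G
    ((Normal.commutator_le_of_self_sup_commutative_eq_top hn inferInstance).trans
      (hD.le_sylow_of_normal P))

lemma hasNormalSylow_of_not_hasPGroupAutomizers [Finite G] [hp : Fact p.Prime]
    (hprop : ∀ H : Subgroup G, H ≠ ⊤ → IsSupersoluble H)
    (hmin : ∀ r : ℕ, r.Prime → r ∣ Nat.card G → p ≤ r)
    (hpG : p ∣ Nat.card G)
    (h : ¬ HasPGroupAutomizers p G) : HasNormalSylow G := by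
  simp only [HasPGroupAutomizers, not_forall] at h
  obtain ⟨D, hD, n, hn, hnC⟩ := h
  by_cases htop : D ⊔ zpowers n = ⊤
  · obtain ⟨P⟩ : Nonempty (Sylow p G) := inferInstance
    have : D.Normal := by
      rw [← normalizer_eq_top_iff, eq_top_iff, ← htop]
      exact sup_le le_normalizer (zpowers_le.2 hn)
    exact ⟨p, hp.out, P, sylow_normal_of_sup_zpowers_eq_top hD htop P, P.ne_bot_of_dvd_card hpG⟩
  · refine absurd (HasPGroupAutomizers.exists_pow_mem_centralizer ?_ hD le_sup_left hn
      (mem_sup_right (mem_zpowers n))) hnC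
    exact (hprop _ htop).hasPGroupAutomizers fun r hr hd =>
      hmin r hr (hd.trans (card_subgroup_dvd_card _))

lemma HasPGroupAutomizers.hasNormalSylow [Finite G] [hp : Fact p.Prime]
    (h : HasPGroupAutomizers p G) (hprop : ∀ H : Subgroup G, H ≠ ⊤ → IsSupersoluble H)
    (hmin : ∀ r : ℕ, r.Prime → r ∣ Nat.card G → p ≤ r) (hpG : p ∣ Nat.card G) :
    HasNormalSylow G := by
  obtain ⟨N, _, hN, k, hk⟩ := h.exists_normal_index_eq_prime_pow hpG
  obtain ⟨K, _, hK⟩ := (hprop N hN).exists_normal_isUpperHall (p + 1)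
  have : K.Characteristic := characteristic_of_coprime_card_index hK.coprime_card_index
  have hM : IsUpperHall (p + 1) (K.map N.subtype) := by
    refine hK.map_subtype fun r hr hd => Nat.lt_succ_iff.2 (Nat.le_of_dvd hp.out.pos ?_)
    exact hr.dvd_of_dvd_pow (hk ▸ hd)
  obtain hbot | hne := eq_or_ne (K.map N.subtype) ⊥
  · rw [hbot] at hM
    have := Finite.one_lt_card_iff_nontrivial.1
      (hp.out.one_lt.trans_le (Nat.le_of_dvd Nat.card_pos hpG))
    exact .of_isPGroup hp.out
      ((isPGroup_quotient_of_isUpperHall hmin hM).of_equiv QuotientGroup.quotientBot)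
  · have := (nontrivial_iff_ne_bot _).2 hne
    exact (hprop _ (ne_top_of_le_ne_top hN (map_subtype_le K))).hasNormalSylow.of_normal_subgroup
      hM.coprime_card_index

theorem hasNormalSylow_of_forall_isSupersoluble [Finite G] [Nontrivial G]
    (hprop : ∀ H : Subgroup G, H ≠ ⊤ → IsSupersoluble H) : HasNormalSylow G := by
  have hne : Nat.card G ≠ 1 := Finite.one_lt_card.ne'
  have : Fact (Nat.card G).minFac.Prime := ⟨Nat.minFac_prime hne⟩
  have hmin (r : ℕ) (hr : r.Prime) (hd : r ∣ Nat.card G) : (Nat.card G).minFac ≤ r :=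
    Nat.minFac_le_of_dvd hr.two_le hd
  by_cases h : HasPGroupAutomizers (Nat.card G).minFac G
  · exact h.hasNormalSylow hprop hmin (Nat.minFac_dvd _)
  · exact hasNormalSylow_of_not_hasPGroupAutomizers hprop hmin (Nat.minFac_dvd _) h

end NormalSylow

section CoprimeAction

open scoped commutatorElement

variable {G G' : Type*} [Group G] [Group G'] {p n : ℕ}

/-- The smallest normal subgroup of `H` whose quotient is abelian of exponent dividing `n`. -/
def abelianExponentResidual (n : ℕ) (H : Subgroup G) : Subgroup G :=
  ⁅H, H⁆ ⊔ closure ((· ^ n) '' (H : Set G))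

lemma abelianExponentResidual_le_iff {H K : Subgroup G} :
    abelianExponentResidual n H ≤ K ↔ ⁅H, H⁆ ≤ K ∧ ∀ a ∈ H, a ^ n ∈ K := by
  rw [abelianExponentResidual, sup_le_iff, closure_le, Set.image_subset_iff]
  rfl

lemma abelianExponentResidual_le (n : ℕ) (H : Subgroup G) : abelianExponentResidual n H ≤ H :=
  abelianExponentResidual_le_iff.2 ⟨commutator_le_self H, fun _ ha => pow_mem ha n⟩

lemma map_abelianExponentResidual (f : G →* G') (H : Subgroup G) :
    (abelianExponentResidual n H).map f = abelianExponentResidual n (H.map f) := by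
  simp only [abelianExponentResidual, Subgroup.map_sup, map_commutator, MonoidHom.map_closure,
    Set.image_image, map_pow, coe_map]

lemma abelianExponentResidual_mono {H K : Subgroup G} (h : H ≤ K) :
    abelianExponentResidual n H ≤ abelianExponentResidual n K :=
  sup_le_sup (commutator_mono h h) (closure_mono (Set.image_mono h))

lemma abelianExponentResidual_card_le_ker {A : Type*} [CommGroup A] (f : G →* A) :
    abelianExponentResidual (Nat.card A) ⊤ ≤ f.ker :=
  abelianExponentResidual_le_iff.2 ⟨Abelianization.commutator_subset_ker f, fun a _ => by
    rw [MonoidHom.mem_ker, map_pow, pow_card_eq_one']⟩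

lemma abelianExponentResidual_top_le_of_sup_eq_top {C H : Subgroup G} [C.Normal] (hCH : C ⊔ H = ⊤)
    (hH : abelianExponentResidual n H ≤ C) : abelianExponentResidual n ⊤ ≤ C := by
  have hmap : H.map (QuotientGroup.mk' C) = (⊤ : Subgroup G).map (QuotientGroup.mk' C) := by
    rw [← hCH, Subgroup.map_sup, QuotientGroup.map_mk'_self, bot_sup_eq]
  rwa [← QuotientGroup.ker_mk' C, ← Subgroup.map_eq_bot_iff, map_abelianExponentResidual, ← hmap,
    ← map_abelianExponentResidual, Subgroup.map_eq_bot_iff, QuotientGroup.ker_mk']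

lemma commute_of_commutator_mem {Y : Subgroup G} (hY : IsPGroup p Y) {h y : G}
    (ho : (orderOf h).Coprime p) (hcomm : ⁅y, h⁆ ∈ Y) (hc : h ∈ centralizer (Y : Set G)) :
    y * h = h * y := by
  have hz : Commute ⁅y, h⁆ h := mem_centralizer_iff.1 hc _ hcomm
  have hconj : y * h * y⁻¹ = ⁅y, h⁆ * h := by rw [commutatorElement_def]; group
  have hzo : ⁅y, h⁆ ^ orderOf h = 1 := by
    rw [← mul_one (_ ^ _), ← pow_orderOf_eq_one h, ← hz.mul_pow, ← hconj, conj_pow,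
      pow_orderOf_eq_one, mul_one, mul_inv_cancel]
  obtain ⟨k, hk⟩ := hY ⟨_, hcomm⟩
  have hzp : ⁅y, h⁆ ^ p ^ k = 1 := congrArg Subtype.val hk
  rw [← commutatorElement_eq_one_iff_mul_comm, ← orderOf_eq_one_iff]
  exact Nat.eq_one_of_dvd_coprimes (ho.pow_right k) (orderOf_dvd_of_pow_eq_one hzo)
    (orderOf_dvd_of_pow_eq_one hzp)

lemma abelianExponentResidual_le_centralizer_of_prime_card {L : Subgroup G} [L.Normal]
    (hL : (Nat.card L).Prime) :
    abelianExponentResidual (Nat.card L - 1) ⊤ ≤ centralizer (L : Set G) := by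
  have : Fact (Nat.card L).Prime := ⟨hL⟩
  have : IsCyclic L := isCyclic_of_prime_card rfl
  obtain ⟨f, hf⟩ := exists_hom_units_ker_le_centralizer L
  rw [← card_units_zmod_prime hL]
  exact (abelianExponentResidual_card_le_ker f).trans hf

/-- A `p'`-element acting trivially on all `p`-chief factors acts trivially on `Y`. -/
theorem IsSupersoluble.mem_centralizer_of_isPGroup [Finite G] [hp : Fact p.Prime]
    (hG : IsSupersoluble G) {Y : Subgroup G} [hYn : Y.Normal] (hY : IsPGroup p Y) {h : G}
    (hh : h ∈ abelianExponentResidual (p - 1) (⊤ : Subgroup G)) (ho : (orderOf h).Coprime p) :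
    h ∈ centralizer (Y : Set G) := by
  obtain ⟨X, ⟨hX, hXY, hhX⟩, hmax⟩ :=
    (Set.toFinite {X : Subgroup G | X.Normal ∧ X ≤ Y ∧ h ∈ centralizer (X : Set G)}).exists_maximal
      ⟨⊥, normal_bot, bot_le, by simp [mem_centralizer_iff]⟩
  suffices Y ≤ X from centralizer_le this hhX
  by_contra hYX
  let π := QuotientGroup.mk' X
  have hπ : Function.Surjective π := QuotientGroup.mk'_surjective X
  have : (Y.map π).Normal := hYn.map _ hπ
  obtain ⟨L, hL, hLY, hLp⟩ := (hG.of_surjective hπ).exists_normal_prime_card (A := Y.map π)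
    (by rwa [Ne, Subgroup.map_eq_bot_iff, QuotientGroup.ker_mk'])
  have hLcard : Nat.card L = p := by
    obtain ⟨k, hk⟩ := ((hY.map π).to_le hLY).exists_card_eq
    exact (Nat.prime_dvd_prime_iff_eq hLp hp.out).1 (hLp.dvd_of_dvd_pow hk.dvd)
  have hhL : π h ∈ centralizer (L : Set (G ⧸ X)) := by
    refine abelianExponentResidual_le_centralizer_of_prime_card hLp (hLcard ▸ ?_)
    rw [← Subgroup.map_top_of_surjective π hπ, ← map_abelianExponentResidual]
    exact mem_map_of_mem π hh
  have hXL : X ≤ L.comap π := QuotientGroup.le_comap_mk' X L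
  have hLY' : L.comap π ≤ Y := by
    refine (comap_mono hLY).trans_eq (comap_map_eq_self ?_)
    rwa [QuotientGroup.ker_mk']
  have hcent : h ∈ centralizer (L.comap π : Set G) := by
    refine mem_centralizer_iff.2 fun y hy => ?_
    refine commute_of_commutator_mem (hY.to_le hXY) ho ?_ hhX
    rw [← QuotientGroup.eq_one_iff]
    exact commutatorElement_eq_one_iff_mul_comm.2 (mem_centralizer_iff.1 hhL _ hy)
  have hLX : L.comap π ≤ X := hmax ⟨hL.comap π, hLY', hcent⟩ hXL
  refine hLp.one_lt.ne' (card_eq_one.2 ?_)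
  rw [← map_comap_eq_self_of_surjective hπ L, Subgroup.map_eq_bot_iff, QuotientGroup.ker_mk']
  exact hLX

end CoprimeAction

section MinimalNormal

open scoped commutatorElement IsMulCommutative

lemma exists_hasEigenvalue_of_pow_card_sub_one_eq_one {K E : Type*} [Field K] [Finite K]
    [AddCommGroup E] [Module K E] [FiniteDimensional K E] [Nontrivial E] {T : Module.End K E}
    (hT : T ^ (Nat.card K - 1) = 1) : ∃ μ : K, T.HasEigenvalue μ := by
  have hTq : T ^ Nat.card K = T := by
    rw [← Nat.sub_add_cancel Nat.card_pos, pow_succ, hT, one_mul]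
  have hdvd : minpoly K T ∣ Polynomial.X ^ Nat.card K - Polynomial.X :=
    minpoly.dvd K T (by simp only [map_sub, map_pow, Polynomial.aeval_X, hTq, sub_self])
  have hsplits := (Polynomial.splits_X_pow_nat_card_sub_X (K := K)).of_dvd
    (FiniteField.X_pow_card_sub_X_ne_zero K Finite.one_lt_card) hdvd
  obtain ⟨μ, hμ⟩ := hsplits.exists_eval_eq_zero
    (minpoly.degree_pos (Algebra.IsIntegral.isIntegral T)).ne'
  exact ⟨μ, Module.End.hasEigenvalue_of_isRoot hμ⟩

lemma exists_apply_eq_pow_of_pow_eq_one {p : ℕ} [Fact p.Prime] {V : Type*} [CommGroup V]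
    [Finite V] [Nontrivial V] (hV : ∀ v : V, v ^ p = 1) {φ : Monoid.End V}
    (hφ : φ ^ (p - 1) = 1) : ∃ (i : ℕ) (v : V), v ≠ 1 ∧ φ v = v ^ i := by
  let : Module (ZMod p) (Additive V) := AddCommGroup.zmodModule (n := p) fun v => hV v.toMul
  let T : Module.End (ZMod p) (Additive V) := (MonoidHom.toAdditive φ).toZModLinearMap p
  have hT : T ^ (Nat.card (ZMod p) - 1) = 1 := by
    ext v
    rw [Nat.card_zmod, Module.End.pow_apply]
    exact congrArg Additive.ofMul ((congrFun (Monoid.End.coe_pow V φ (p - 1)) v.toMul).symm.trans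
      (DFunLike.congr_fun hφ v.toMul))
  obtain ⟨μ, hμ⟩ := exists_hasEigenvalue_of_pow_card_sub_one_eq_one hT
  obtain ⟨v, hv⟩ := hμ.exists_hasEigenvector
  refine ⟨μ.val, v.toMul, hv.2, ?_⟩
  have hTv : T v = μ.val • v := by
    rw [hv.apply_eq_smul, ← Nat.cast_smul_eq_nsmul (ZMod p), ZMod.natCast_zmod_val]
  exact congrArg Additive.toMul hTv

variable {G : Type*} [Group G] {p : ℕ}

lemma exists_isMinimalNormal_le [Finite G] {A : Subgroup G} (hA : A.Normal) (hne : A ≠ ⊥) :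
    ∃ V ≤ A, IsMinimalNormal V := by
  obtain ⟨V, hVA, ⟨hV, hV0⟩, hmin⟩ :=
    (Set.toFinite {V : Subgroup G | V.Normal ∧ V ≠ ⊥}).exists_le_minimal ⟨hA, hne⟩
  exact ⟨V, hVA, hV, hV0, fun M hM hMV hM0 => le_antisymm hMV (hmin ⟨hM, hM0⟩ hMV)⟩

lemma IsMinimalNormal.conj_eq_pow {V : Subgroup G} [IsMulCommutative V] (hV : IsMinimalNormal V)
    {a v : G} {i : ℕ} (ha : ∀ g, ⁅a, g⁆ ∈ centralizer (V : Set G)) (hvV : v ∈ V) (hv : v ≠ 1)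
    (hav : a * v * a⁻¹ = v ^ i) {w : G} (hw : w ∈ V) : a * w * a⁻¹ = w ^ i := by
  have := hV.1
  let U : Subgroup V := (MulAut.conjNormal a : MulAut V).toMonoidHom.eqLocus (powMonoidHom i)
  have hmem : ∀ x : V, x ∈ U ↔ a * (x : G) * a⁻¹ = (x : G) ^ i := fun _ => Subtype.ext_iff
  have hU : (U.map V.subtype).Normal := by
    refine ⟨?_⟩
    rintro _ ⟨x, hx, rfl⟩ g
    refine ⟨MulAut.conjNormal g x, (hmem _).2 ?_, MulAut.conjNormal_apply g x⟩
    rw [MulAut.conjNormal_apply]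
    have hc : ⁅a, g⁆ * (g * x * g⁻¹) ^ i = (g * x * g⁻¹) ^ i * ⁅a, g⁆ :=
      (mem_centralizer_iff.1 (ha g) _ (pow_mem (hV.1.conj_mem _ x.2 g) i)).symm
    calc a * (g * x * g⁻¹) * a⁻¹
        = ⁅a, g⁆ * (g * (a * x * a⁻¹) * g⁻¹) * ⁅a, g⁆⁻¹ := by rw [commutatorElement_def]; group
      _ = ⁅a, g⁆ * (g * x * g⁻¹) ^ i * ⁅a, g⁆⁻¹ := by rw [(hmem x).1 hx, conj_pow]
      _ = (g * x * g⁻¹) ^ i := by rw [hc, mul_inv_cancel_right]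
  have hv' : v ∈ U.map V.subtype := ⟨⟨v, hvV⟩, (hmem _).2 hav, rfl⟩
  have hUV : U.map V.subtype = V := hV.2.2 _ hU (map_subtype_le U) fun h0 =>
    hv (mem_bot.1 (h0 ▸ hv'))
  obtain ⟨x, hx, rfl⟩ := hUV.ge hw
  exact (hmem x).1 hx

lemma IsMinimalNormal.pow_eq_one [Finite G] [hp : Fact p.Prime] {V : Subgroup G}
    [IsMulCommutative V] (hV : IsMinimalNormal V) (hVp : IsPGroup p V) {w : G} (hw : w ∈ V) :
    w ^ p = 1 := by
  have : Nontrivial V := (nontrivial_iff_ne_bot V).2 hV.2.1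
  obtain ⟨n, hn, hcard⟩ := hVp.nontrivial_iff_card.1 this
  obtain ⟨v, hv⟩ := exists_prime_orderOf_dvd_card' (G := V) p (hcard ▸ dvd_pow_self p hn.ne')
  have hvp : (v : G) ^ p = 1 := by rw [← hv, ← Subgroup.orderOf_coe, pow_orderOf_eq_one]
  have hv1 : (v : G) ≠ 1 := fun h1 => hp.out.one_lt.ne' (by
    rw [← hv, ← Subgroup.orderOf_coe, h1, orderOf_one])
  have hpow := hV.conj_eq_pow (a := 1) (i := p + 1) (fun g => by simp) v.2 hv1
    (by rw [pow_succ, hvp]; group) hw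
  rwa [one_mul, inv_one, mul_one, pow_succ, right_eq_mul] at hpow

lemma IsMinimalNormal.exists_conj_eq_pow [Finite G] [hp : Fact p.Prime] {V : Subgroup G}
    [IsMulCommutative V] (hV : IsMinimalNormal V) (hVp : IsPGroup p V)
    (hres : abelianExponentResidual (p - 1) ⊤ ≤ centralizer (V : Set G)) (a : G) :
    ∃ i : ℕ, ∀ w ∈ V, a * w * a⁻¹ = w ^ i := by
  have := hV.1
  have : Nontrivial V := (nontrivial_iff_ne_bot V).2 hV.2.1
  obtain ⟨hcomm, hpow⟩ := abelianExponentResidual_le_iff.1 hres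
  have hφ : MulDistribMulAction.toMonoidEnd (MulAut V) V (MulAut.conjNormal a) ^ (p - 1) = 1 := by
    rw [← map_pow, ← map_pow]
    ext v
    change ((MulAut.conjNormal (a ^ (p - 1)) v : V) : G) = v
    rw [MulAut.conjNormal_apply, ← mem_centralizer_iff.1 (hpow a (mem_top a)) v v.2,
      mul_inv_cancel_right]
  obtain ⟨i, v, hv, hi⟩ :=
    exists_apply_eq_pow_of_pow_eq_one (fun v => Subtype.ext (hV.pow_eq_one hVp v.2)) hφ
  refine ⟨i, fun w hw => hV.conj_eq_pow (fun g => hcomm ?_) v.2 (fun h1 => hv (Subtype.ext h1))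
    (congrArg Subtype.val hi) hw⟩
  exact commutator_mem_commutator (mem_top a) (mem_top g)

lemma exists_normal_zpowers_of_abelianExponentResidual_le [Finite G] [hp : Fact p.Prime]
    {P H : Subgroup G} [hPn : P.Normal] (hP : IsPGroup p P) (hP0 : P ≠ ⊥) (hPH : P ⊔ H = ⊤)
    (hres : abelianExponentResidual (p - 1) H ≤ centralizer (P : Set G)) :
    ∃ v ∈ P, v ≠ 1 ∧ (zpowers v).Normal := by
  have : Nontrivial P := (nontrivial_iff_ne_bot P).2 hP0
  obtain ⟨V, hVZ, hV⟩ := exists_isMinimalNormal_le (A := (center P).map P.subtype)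
    ConjAct.normal_of_characteristic_of_normal
    (by rw [Ne, map_eq_bot_iff_of_injective _ P.subtype_injective]; exact hP.bot_lt_center.ne')
  have hVP : V ≤ P := hVZ.trans (map_subtype_le _)
  have hPV : P ≤ centralizer (V : Set G) := by
    rw [le_centralizer_iff]
    refine hVZ.trans ?_
    rintro _ ⟨z, hz, rfl⟩
    exact mem_centralizer_iff.2 fun x hx => congrArg Subtype.val (mem_center_iff.1 hz ⟨x, hx⟩)
  have : IsMulCommutative V := le_centralizer_iff_isMulCommutative.1 (hVP.trans hPV)
  have := hV.1
  have hCH : centralizer (V : Set G) ⊔ H = ⊤ := eq_top_iff.2 (hPH ▸ sup_le_sup_right hPV H)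
  have hresV := abelianExponentResidual_top_le_of_sup_eq_top hCH (hres.trans (centralizer_le hVP))
  obtain ⟨v, hvV, hv⟩ := V.bot_or_exists_ne_one.resolve_left hV.2.1
  refine ⟨v, hVP hvV, hv, ⟨?_⟩⟩
  rintro _ ⟨k, rfl⟩ g
  obtain ⟨i, hi⟩ := hV.exists_conj_eq_pow (hP.to_le hVP) hresV g
  rw [← conj_zpow, hi v hvV]
  exact zpow_mem (pow_mem (mem_zpowers v) i) k

theorem hasCyclicSeries_of_abelianExponentResidual_le [Finite G] [Fact p.Prime]
    {P H : Subgroup G} [hPn : P.Normal] (hP : IsPGroup p P) (hPH : P ⊔ H = ⊤)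
    (hres : abelianExponentResidual (p - 1) H ≤ centralizer (P : Set G)) :
    HasCyclicSeries ⊥ P := by
  refine .of_forall_exists fun X hX hXP => ?_
  let π := QuotientGroup.mk' X
  have hπ : Function.Surjective π := QuotientGroup.mk'_surjective X
  have : (P.map π).Normal := hPn.map _ hπ
  obtain ⟨w, ⟨v, hvP, rfl⟩, hv, hnormal⟩ := exists_normal_zpowers_of_abelianExponentResidual_le
    (hP.map π) (H := H.map π)
    (by rw [Ne, Subgroup.map_eq_bot_iff, QuotientGroup.ker_mk']; exact hXP.not_ge)
    (by rw [← Subgroup.map_sup, hPH, Subgroup.map_top_of_surjective _ hπ])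
    (by
      rw [← map_abelianExponentResidual]
      exact (map_mono hres).trans (map_centralizer_le_centralizer_image _ π))
  refine ⟨v, hvP, fun hvX => hv ((QuotientGroup.eq_one_iff v).2 hvX), ?_⟩
  rw [sup_comm, ← QuotientGroup.ker_mk' X, ← comap_map_eq, MonoidHom.map_zpowers]
  exact hnormal.comap π

end MinimalNormal

section Transfer

variable {G : Type*} [Group G] {p : ℕ}

/-- On a central element, the transfer into `P / ⁅P, P⁆` is the power map of exponent
`P.index`, and it vanishes on commutators. -/
lemma pow_index_mem_commutator {P : Subgroup G} [P.FiniteIndex] {m : G}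
    (hcenter : m ∈ center G) (hcomm : m ∈ commutator G) : m ^ P.index ∈ ⁅P, P⁆ := by
  have hconj : ∀ (k : ℕ) (g : G), g⁻¹ * m ^ k * g ∈ P → g⁻¹ * m ^ k * g = m ^ k := fun k g _ => by
    rw [mul_assoc, ← mem_center_iff.1 (pow_mem hcenter k) g, inv_mul_cancel_left]
  have htransfer := MonoidHom.transfer_eq_pow (Abelianization.of (G := P)) m hconj
  rw [MonoidHom.mem_ker.1 (Abelianization.commutator_subset_ker _ hcomm), eq_comm,
    ← MonoidHom.mem_ker, Abelianization.ker_of] at htransfer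
  rw [← map_subtype_commutator]
  exact mem_map_of_mem P.subtype htransfer

lemma le_commutator_of_le_centralizer [hp : Fact p.Prime] {P B M : Subgroup G}
    [P.FiniteIndex] (hP : IsPGroup p P) (hpB : ¬ p ∣ P.relIndex B) (hPB : P ≤ ⁅B, B⁆)
    (hMP : M ≤ P) (hMB : M ≤ centralizer (B : Set G)) : M ≤ ⁅P, P⁆ := by
  intro m hm
  have hmB : m ∈ B := hPB.trans (commutator_le_self B) (hMP hm)
  have hcenter : (⟨m, hmB⟩ : B) ∈ center B :=
    mem_center_iff.2 fun b => Subtype.ext (mem_centralizer_iff.1 (hMB hm) b b.2)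
  have hcomm : (⟨m, hmB⟩ : B) ∈ commutator B := by
    rw [← mem_map_iff_mem B.subtype_injective, map_subtype_commutator]
    exact hPB (hMP hm)
  have hpow : m ^ P.relIndex B ∈ ⁅P, P⁆ := by
    have hle : (P.subgroupOf B).map B.subtype ≤ P :=
      (subgroupOf_map_subtype P B).trans_le inf_le_left
    have := mem_map_of_mem B.subtype
      (pow_index_mem_commutator (P := P.subgroupOf B) hcenter hcomm)
    rw [map_commutator] at this
    exact commutator_mono hle hle this
  have hcop : (P.relIndex B).Coprime (orderOf m) := by
    obtain ⟨k, hk⟩ := IsPGroup.iff_orderOf.1 hP ⟨m, hMP hm⟩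
    rw [← Subgroup.orderOf_coe] at hk
    exact hk ▸ ((hp.out.coprime_iff_not_dvd.2 hpB).symm.pow_right k)
  obtain ⟨j, hj⟩ := exists_pow_eq_self_of_coprime hcop
  exact hj ▸ pow_mem hpow j

end Transfer

section NormalSylowStructure

variable {G : Type*} [Group G] {p : ℕ}

lemma IsSupersoluble.hasCyclicSeries_of_sup_eq_top {N H : Subgroup G} [N.Normal]
    (hH : IsSupersoluble H) (hNH : N ⊔ H = ⊤) : HasCyclicSeries N ⊤ := by
  refine isSupersoluble_quotient_iff.1
    (hH.of_surjective (f := (QuotientGroup.mk' N).comp H.subtype) ?_)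
  rw [← MonoidHom.range_eq_top, MonoidHom.range_comp, range_subtype, eq_top_iff,
    ← Subgroup.map_top_of_surjective _ (QuotientGroup.mk'_surjective N), ← hNH, Subgroup.map_sup,
    QuotientGroup.map_mk'_self, bot_sup_eq]

lemma IsMinimalNonsupersoluble.hasCyclicSeries_of_isComplement' (hG : IsMinimalNonsupersoluble G)
    {P H : Subgroup G} [P.Normal] (hP : P ≠ ⊥) (hPH : IsComplement' P H) : HasCyclicSeries P ⊤ :=
  (hG.2 H fun htop => hP (isComplement'_top_right.1 (htop ▸ hPH))).hasCyclicSeries_of_sup_eq_top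
    hPH.sup_eq_top

lemma sup_ne_top_of_lt_of_disjoint {P H M : Subgroup G} [M.Normal] (hPH : Disjoint P H)
    (hMP : M < P) : M ⊔ H ≠ ⊤ := by
  refine fun htop => hMP.not_ge fun x hx => ?_
  obtain ⟨m, hm, u, hu, rfl⟩ := mem_sup_of_normal_left.1 (htop ▸ mem_top x : x ∈ M ⊔ H)
  have huP : u ∈ P := (mul_mem_cancel_left (hMP.le hm)).1 hx
  rwa [disjoint_def.1 hPH huP hu, mul_one]

lemma abelianExponentResidual_le_centralizer [Finite G] [hp : Fact p.Prime] {M H : Subgroup G}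
    [M.Normal] (hM : IsPGroup p M) (hH : (Nat.card H).Coprime p)
    (hsup : IsSupersoluble (M ⊔ H : Subgroup G)) :
    abelianExponentResidual (p - 1) H ≤ centralizer (M : Set G) := by
  have hHmap : (H.subgroupOf (M ⊔ H)).map (M ⊔ H).subtype = H :=
    map_subgroupOf_eq_of_le le_sup_right
  intro h hh
  have hho : (orderOf h).Coprime p :=
    hH.coprime_dvd_left (H.orderOf_dvd_natCard (abelianExponentResidual_le _ H hh))
  rw [← hHmap, ← map_abelianExponentResidual] at hh
  obtain ⟨k, hk, rfl⟩ := hh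
  have hkc := hsup.mem_centralizer_of_isPGroup (Y := M.subgroupOf (M ⊔ H))
    (hM.comap_of_injective _ (subtype_injective _)) (abelianExponentResidual_mono le_top hk)
    (by rwa [← Subgroup.orderOf_coe])
  exact mem_centralizer_iff.2 fun y hy =>
    congrArg Subtype.val (mem_centralizer_iff.1 hkc ⟨y, mem_sup_left hy⟩ hy)

lemma le_centralizer_of_le_centralizer_commutator {P N R : Subgroup G}
    (hPN : IsPGroup p (⁅P, N⁆ : Subgroup G)) (hRN : R ≤ N) (hR : ∀ h ∈ R, (orderOf h).Coprime p)
    (hc : R ≤ centralizer ((⁅P, N⁆ : Subgroup G) : Set G)) : R ≤ centralizer (P : Set G) :=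
  fun h hh => mem_centralizer_iff.2 fun _ hy =>
    commute_of_commutator_mem hPN (hR h hh) (commutator_mem_commutator hy (hRN hh)) (hc hh)

theorem IsMinimalNonsupersoluble.le_commutator_of_lt [Finite G] [hp : Fact p.Prime]
    (hG : IsMinimalNonsupersoluble G) {P H M : Subgroup G} [P.Normal] [M.Normal]
    (hP : IsPGroup p P) (hpP : ¬ p ∣ P.index) (hPH : IsComplement' P H) (hMP : M < P) :
    M ≤ ⁅P, P⁆ := by
  set R := abelianExponentResidual (p - 1) H
  set B := normalClosure (R : Set G)
  have hRB : R ≤ B := le_normalClosure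
  have hHp : (Nat.card H).Coprime p := by
    rw [← hPH.symm.index_eq_card]
    exact (hp.out.coprime_iff_not_dvd.2 hpP).symm
  have hRX : ∀ X : Subgroup G, X.Normal → X < P → R ≤ centralizer (X : Set G) := fun X _ hX =>
    abelianExponentResidual_le_centralizer (hP.to_le hX.le) hHp
      (hG.2 _ (sup_ne_top_of_lt_of_disjoint hPH.disjoint hX))
  have hPB : ⁅P, B⁆ = P := by
    refine (commutator_le_left P B).eq_or_lt.resolve_right fun hlt => hG.1 ?_
    have hRP : R ≤ centralizer (P : Set G) :=
      le_centralizer_of_le_centralizer_commutator (hP.to_le hlt.le) hRB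
        (fun h hh => hHp.coprime_dvd_left
          (H.orderOf_dvd_natCard (abelianExponentResidual_le _ H hh)))
        (hRX _ inferInstance hlt)
    rw [isSupersoluble_iff_hasCyclicSeries]
    exact (hasCyclicSeries_of_abelianExponentResidual_le hP hPH.sup_eq_top hRP).trans
      (hG.hasCyclicSeries_of_isComplement' (ne_bot_of_gt hMP) hPH)
  have hPB' : P ≤ ⁅B, B⁆ :=
    hPB.ge.trans (commutator_mono (hPB.ge.trans (commutator_le_right P B)) le_rfl)
  refine le_commutator_of_le_centralizer hP
    (fun hdvd => hpP (hdvd.trans (relIndex_dvd_index_of_normal P B))) hPB' hMP.le ?_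
  rw [le_centralizer_iff]
  exact normalClosure_le_normal (hRX M inferInstance hMP)

end NormalSylowStructure

section Frattini

variable {G : Type*} [Group G]

lemma commutator_le_frattini [Group.IsNilpotent G] : commutator G ≤ frattini G := by
  refine le_iInf₂ fun K hK => ?_
  have : K.Normal := Group.normalizerCondition_of_isNilpotent.normal_of_coatom K hK
  obtain ⟨x, -, hx⟩ := SetLike.exists_of_lt hK.lt_top
  exact Normal.commutator_le_of_self_sup_commutative_eq_top
    (hK.2 _ (left_lt_sup.2 fun hle => hx (hle (mem_zpowers x)))) inferInstance

lemma frattiniIn_le (P : Subgroup G) : frattiniIn P ≤ P :=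
  map_subtype_le _

instance frattiniIn_normal (P : Subgroup G) [P.Normal] : (frattiniIn P).Normal :=
  ConjAct.normal_of_characteristic_of_normal

lemma commutator_le_frattiniIn (P : Subgroup G) [Group.IsNilpotent P] : ⁅P, P⁆ ≤ frattiniIn P := by
  rw [← map_subtype_commutator]
  exact map_mono commutator_le_frattini

lemma eq_of_le_frattiniIn_sup {P K : Subgroup G} [IsCoatomic (Subgroup P)] (hKP : K ≤ P)
    (h : P ≤ frattiniIn P ⊔ K) : K = P := by
  refine hKP.antisymm (subgroupOf_eq_top.1 (frattini_nongenerating ?_))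
  rw [eq_top_iff, ← map_le_map_iff_of_injective P.subtype_injective, Subgroup.map_sup,
    map_subgroupOf_eq_of_le hKP, ← MonoidHom.range_eq_map, range_subtype, sup_comm]
  exact h

lemma isSupersoluble_of_le_frattiniIn_sup_zpowers {P : Subgroup G} [P.Normal]
    [IsCoatomic (Subgroup P)] (hP : HasCyclicSeries P ⊤) {a : G} (ha : a ∈ P)
    (h : P ≤ frattiniIn P ⊔ zpowers a) : IsSupersoluble G := by
  have hstep : IsCyclicStep ⊥ P :=
    ⟨inferInstance, ‹_›, a, by rw [bot_sup_eq, eq_of_le_frattiniIn_sup (zpowers_le.2 ha) h]⟩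
  exact isSupersoluble_iff_hasCyclicSeries.2 (hP.head hstep)

end Frattini

section ChiefFactor

variable {G : Type*} [Group G] {A B : Subgroup G} [A.Normal] [B.Normal]

lemma ssResidual_eq_of_forall_lt (hA : HasCyclicSeries A ⊤) (hBA : B ≤ A)
    (hmax : ∀ M : Subgroup G, M.Normal → M < A → M ≤ B)
    (hcyc : ∀ a ∈ A, ¬ A ≤ B ⊔ zpowers a) : ssResidual G = A := by
  refine (iInf₂_le A ⟨‹_›, isSupersoluble_quotient_iff.2 hA⟩).antisymm (le_iInf₂ ?_)
  rintro N ⟨_, hN⟩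
  rw [← inf_eq_right]
  by_contra hne
  obtain ⟨a, haA, haB, hnormal⟩ := (isSupersoluble_quotient_iff.1 hN).exists_normal_sup_zpowers
    (hmax (N ⊓ A) inferInstance (inf_le_right.lt_of_ne hne))
    (fun hAB => hcyc 1 A.one_mem (le_sup_of_le_left (top_inf_eq A ▸ hAB)))
  have hle : B ⊔ zpowers a ≤ A := sup_le hBA (zpowers_le.2 haA)
  have hlt : B ⊔ zpowers a < A := hle.lt_of_not_ge (hcyc a haA)
  exact haB (hmax _ hnormal hlt (mem_sup_right (mem_zpowers a)))

lemma isChiefFactor_of_forall_lt (hBA : B < A)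
    (hmax : ∀ M : Subgroup G, M.Normal → M < A → M ≤ B) : IsChiefFactor A B := by
  have hsurj := QuotientGroup.mk'_surjective B
  refine ⟨‹_›, hBA.le, ‹_›, Normal.map ‹_› _ hsurj, fun hbot => ?_, fun M hM hMA hM0 => ?_⟩
  · rw [Subgroup.map_eq_bot_iff, QuotientGroup.ker_mk'] at hbot
    exact hBA.not_ge hbot
  · rw [← map_comap_eq_self_of_surjective hsurj M] at hMA hM0 ⊢
    have hle : M.comap (QuotientGroup.mk' B) ≤ A := by
      simpa [Subgroup.map_le_map_iff, hBA.le] using hMA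
    rw [Ne, Subgroup.map_eq_bot_iff, QuotientGroup.ker_mk'] at hM0
    rw [hle.eq_or_lt.resolve_right fun hlt => hM0 (hmax _ (hM.comap _) hlt)]

end ChiefFactor

section MinimalNonsupersoluble

variable {G : Type*} [Group G]

lemma IsMinimalNonsupersoluble.nontrivial (hG : IsMinimalNonsupersoluble G) : Nontrivial G := by
  by_contra hnt
  rw [not_nontrivial_iff_subsingleton] at hnt
  refine hG.1 (isSupersoluble_iff_hasCyclicSeries.2 ?_)
  rw [Subsingleton.elim ⊥ (⊤ : Subgroup G)]
  exact Relation.ReflTransGen.refl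

theorem IsMinimalNonsupersoluble.exists_normal_hasCyclicSeries [Finite G]
    (hG : IsMinimalNonsupersoluble G) : ∃ P : Subgroup G, P.Normal ∧ HasCyclicSeries P ⊤ ∧
      ∀ M : Subgroup G, M.Normal → M < P → M ≤ frattiniIn P := by
  have := hG.nontrivial
  obtain ⟨p, hp, P, _, hP⟩ := hasNormalSylow_of_forall_isSupersoluble hG.2
  have : Fact p.Prime := ⟨hp⟩
  have : Group.IsNilpotent P := P.isPGroup'.isNilpotent
  obtain ⟨H, hPH⟩ := exists_right_complement'_of_coprime P.card_coprime_index
  refine ⟨P, ‹_›, hG.hasCyclicSeries_of_isComplement' hP hPH, fun M _ hMP => ?_⟩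
  exact (hG.le_commutator_of_lt P.isPGroup' P.not_dvd_index hPH hMP).trans
    (commutator_le_frattiniIn _)

end MinimalNonsupersoluble

/-- In a minimal nonsupersoluble group `G`, the factor `G^𝔘/Φ(G^𝔘)` is a noncyclic chief
factor of `G`. -/
theorem minimalNonsupersoluble_ssResidual_frattini_chief
    (G : Type*) [Group G] [Finite G] (h : IsMinimalNonsupersoluble G) :
    IsChiefFactor (ssResidual G) (frattiniIn (ssResidual G)) ∧
      ∃ hB : (frattiniIn (ssResidual G)).Normal,
        haveI := hB
        ¬ IsCyclic
          ↥((ssResidual G).map (QuotientGroup.mk' (frattiniIn (ssResidual G)))) := by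
  obtain ⟨P, _, hP, hmax⟩ := h.exists_normal_hasCyclicSeries
  have hcyc : ∀ a ∈ P, ¬ P ≤ frattiniIn P ⊔ zpowers a := fun a ha hle =>
    h.1 (isSupersoluble_of_le_frattiniIn_sup_zpowers hP ha hle)
  have hlt : frattiniIn P < P :=
    (frattiniIn_le P).lt_of_not_ge fun hle => hcyc 1 P.one_mem (le_sup_of_le_left hle)
  rw [ssResidual_eq_of_forall_lt hP hlt.le hmax hcyc]
  refine ⟨isChiefFactor_of_forall_lt hlt hmax, inferInstance, ?_⟩
  rw [isCyclic_map_iff, QuotientGroup.ker_mk']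
  rintro ⟨a, ha, hle⟩
  exact hcyc a ha (sup_comm (zpowers a) _ ▸ hle)
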